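/- Let 𝐅 = (F_1,…,F_d) ∈ F_d^0. The symmetrizing operator S_𝐅 is a bijection from C^OS(𝐅) ∩ C^0 onto C^sym(𝐅) ∩ C^0; moreover, if C ∈ C^OS(𝐅) ∩ C^0 has density c, then the density of S_𝐅(C) is given, for almost every u ∈ [0,1]^d, by (1/d!) c(δ_(1)(u_(1)),…,δ_(d)(u_(d))) ∏_{i=1}^d δ'_{(i)}(u_{(i)}), where u_(1) ≤ ⋯ ≤ u_(d) is the ordered vector of u and δ^𝐅 = (δ_(1),…,δ_(d)) = (F_i ∘ G^{-1}, 1 ≤ i ≤ d) with G = (1/d) Σ_{i=1}^d F_i. -/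

import Mathlib

/- Formalization framework for "Maximum entropy distribution of order statistics with given
marginals" (Butucea, Delmas, Dutfoy, Fischer).  One-dimensional cdfs are identified with
(probability) measures on `ℝ`, and cdfs on `ℝ^d` with measures on `Fin d → ℝ`. -/

open MeasureTheory Set
open scoped ENNReal

noncomputable section

namespace MaxEntOS

variable {d : ℕ}

/-- The cumulative distribution function of a measure on `ℝ`. -/
def cdf1 (ν : Measure ℝ) (t : ℝ) : ℝ := (ν (Iic t)).toReal

/-- The cdf extended to `EReal` arguments (so that `cdfE ν ⊥ = 0` and `cdfE ν ⊤ = ν ℝ`). -/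
def cdfE (ν : Measure ℝ) (x : EReal) : ℝ := (ν {s : ℝ | (s : EReal) ≤ x}).toReal

/-- The generalized inverse (quantile function) of the cdf of `ν`, real-valued. -/
def qReal (ν : Measure ℝ) (t : ℝ) : ℝ := sInf {s : ℝ | t ≤ cdf1 ν s}

/-- The generalized inverse of a nondecreasing function `g : ℝ → ℝ`, `EReal`-valued, with the
conventions `inf ∅ = ⊤` and `inf ℝ = ⊥`. -/
def qInvE (g : ℝ → ℝ) (t : ℝ) : EReal := sInf ((fun s : ℝ => (s : EReal)) '' {s : ℝ | t ≤ g s})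

open scoped Classical in
/-- The differential entropy (with respect to Lebesgue measure) of a measure, with values in
`EReal` : it equals `⊥` if the measure is not absolutely continuous, and otherwise it is
`−∫ f log f`, computed as the difference of the lower integrals of the negative and positive
parts of `f log f`, where `f` is the density. -/
def dEntropy {α : Type*} [MeasureSpace α] (μ : Measure α) : EReal :=
  if μ ≪ (volume : Measure α) then
    ((∫⁻ x, ENNReal.ofReal
        (-((μ.rnDeriv volume x).toReal * Real.log ((μ.rnDeriv volume x).toReal))) : ℝ≥0∞) : EReal)
      - ((∫⁻ x, ENNReal.ofReal
        ((μ.rnDeriv volume x).toReal * Real.log ((μ.rnDeriv volume x).toReal)) : ℝ≥0∞) : EReal)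
  else ⊥

/-- The nondecreasing rearrangement (order statistics) of a tuple. -/
def orderStat (x : Fin d → ℝ) : Fin d → ℝ := fun i => x (Tuple.sort x i)

/-- The `i`-th one-dimensional marginal of a measure on `ℝ^d`. -/
def marg (μ : Measure (Fin d → ℝ)) (i : Fin d) : Measure ℝ := μ.map fun x => x i

/-- The multidiagonal of a measure on `ℝ^d` : the tuple of one-dimensional marginals of the
order statistics. -/
def multidiag (μ : Measure (Fin d → ℝ)) (i : Fin d) : Measure ℝ := μ.map fun x => orderStat x i

/-- The uniform distribution on `[0,1]`. -/
def uniform01 : Measure ℝ := (volume : Measure ℝ).restrict (Icc 0 1)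

/-- A copula : a probability measure on `ℝ^d` whose one-dimensional marginals are all uniform
on `[0,1]`. -/
def IsCopula (μ : Measure (Fin d → ℝ)) : Prop :=
  IsProbabilityMeasure μ ∧ ∀ i, marg μ i = uniform01

/-- A measure on `ℝ^d` is symmetric (exchangeable) if it is invariant under permutations of the
coordinates. -/
def IsSymmetric (μ : Measure (Fin d → ℝ)) : Prop :=
  ∀ π : Equiv.Perm (Fin d), μ.map (fun x => fun i => x (π i)) = μ

/-- `δ` belongs to `D` : it is the multidiagonal of some copula. -/
def IsMultidiag (δ : Fin d → Measure ℝ) : Prop :=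
  ∃ μ : Measure (Fin d → ℝ), IsCopula μ ∧ multidiag μ = δ

/-- `δ` belongs to `D^0` : it is the multidiagonal of some absolutely continuous copula. -/
def IsMultidiag0 (δ : Fin d → Measure ℝ) : Prop :=
  ∃ μ : Measure (Fin d → ℝ), IsCopula μ ∧ μ ≪ (volume : Measure (Fin d → ℝ)) ∧ multidiag μ = δ

/-- `F ∈ F_d` : `F` is a `d`-tuple of continuous one-dimensional cdfs (identified with atomless
probability measures on `ℝ`) which are stochastically ordered : `F (i-1) ≥ F i` pointwise. -/
structure IsMargOS [NeZero d] (F : Fin d → Measure ℝ) : Prop where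
  prob : ∀ i, IsProbabilityMeasure (F i)
  cont : ∀ i, ∀ t : ℝ, F i {t} = 0
  ord : ∀ i : Fin d, i ≠ 0 → ∀ t : ℝ, cdf1 (F i) t ≤ cdf1 (F (i - 1)) t

/-- `μ ∈ L^OS_d(F)` : `μ` is the distribution of a `d`-dimensional order statistic (an almost
surely nondecreasing random vector) with one-dimensional marginals `F`. -/
def IsCdfOS (F : Fin d → Measure ℝ) (μ : Measure (Fin d → ℝ)) : Prop :=
  IsProbabilityMeasure μ ∧ μ {x | Monotone x} = 1 ∧ ∀ i, marg μ i = F i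

/-- `F ∈ F_d^0` : there exists an absolutely continuous distribution of order statistics with
one-dimensional marginals `F`. -/
def IsMargOS0 [NeZero d] (F : Fin d → Measure ℝ) : Prop :=
  IsMargOS F ∧ ∃ μ : Measure (Fin d → ℝ), IsCdfOS F μ ∧ μ ≪ (volume : Measure (Fin d → ℝ))

/-- The functional `J(F) = ∑_{i=2}^d ∫ |log (F_{i-1}(t) − F_i(t))| dF_i(t) ∈ [0,∞]`. -/
def Jfun [NeZero d] (F : Fin d → Measure ℝ) : ℝ≥0∞ :=
  ∑ i : Fin d, if i = 0 then 0 else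
    ∫⁻ t, ENNReal.ofReal |Real.log (cdf1 (F (i - 1)) t - cdf1 (F i) t)| ∂(F i)

/-- The copula of a measure on `ℝ^d` (for continuous marginals this is the unique copula
provided by Sklar's theorem) : the law of `(F_1(X_1), …, F_d(X_d))`. -/
def copulaOf (μ : Measure (Fin d → ℝ)) : Measure (Fin d → ℝ) :=
  μ.map fun x => fun i => cdf1 (marg μ i) (x i)

/-- The set `C^{OS}(F)` of copulas of distributions of order statistics with marginal
cdfs `F`. -/
def copulaOS (F : Fin d → Measure ℝ) : Set (Measure (Fin d → ℝ)) :=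
  {C | ∃ μ, IsCdfOS F μ ∧ copulaOf μ = C}

/-- The joint distribution with one-dimensional marginals `F` and copula `C` : the law of
`(F_1^{-1}(U_1), …, F_d^{-1}(U_d))` where `U ∼ C`. -/
def joinCopula (F : Fin d → Measure ℝ) (C : Measure (Fin d → ℝ)) : Measure (Fin d → ℝ) :=
  C.map fun u => fun i => qReal (F i) (u i)

/-- The law of `X_Π`, where `X ∼ μ` and `Π` is an independent uniform random permutation of
`{1, …, d}`. -/
def symmetrize (μ : Measure (Fin d → ℝ)) : Measure (Fin d → ℝ) :=
  (d.factorial : ℝ≥0∞)⁻¹ • ∑ π : Equiv.Perm (Fin d), μ.map (fun x => fun i => x (π i))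

/-- The symmetrizing operator `S_F` on copulas : `S_F(C)` is the copula of `X_Π` where `X` has
one-dimensional marginals `F` and copula `C`, and `Π` is an independent uniform random
permutation. -/
def SF (F : Fin d → Measure ℝ) (C : Measure (Fin d → ℝ)) : Measure (Fin d → ℝ) :=
  copulaOf (symmetrize (joinCopula F C))

/-- The average cdf `G = (1/d) ∑_{i=1}^d F_i`. -/
def Gbar (F : Fin d → Measure ℝ) (t : ℝ) : ℝ := (∑ i, cdf1 (F i) t) / d

/-- `G` extended to `EReal` arguments (`GbarE F ⊥ = 0` and `GbarE F ⊤ = 1` for probability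
measures). -/
def GbarE (F : Fin d → Measure ℝ) (x : EReal) : ℝ := (∑ i, cdfE (F i) x) / d

/-- The multidiagonal `δ^F` associated to the marginals `F`, as a tuple of measures : the law
of `G(X_i)` where `X_i ∼ F_i`, whose cdf is `F_i ∘ G^{-1}`. -/
def mdiagF (F : Fin d → Measure ℝ) (i : Fin d) : Measure ℝ := (F i).map (Gbar F)

/-- `C` is a copula of the measure `ν` on `ℝ^d` : `C` is a copula and `ν` is the joint
distribution with the marginals of `ν` and copula `C`. -/
def IsCopulaOf (C ν : Measure (Fin d → ℝ)) : Prop :=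
  IsCopula C ∧ ν = joinCopula (marg ν) C

/-- The extended tuple of multidiagonal cdfs, with the conventions `δ_(0) = 1` and
`δ_(d+1) = 0`; the natural index `i ∈ {1, …, d}` corresponds to `δ_(i)`. -/
def dcdf (δ : Fin d → Measure ℝ) (i : ℕ) (t : ℝ) : ℝ :=
  if h0 : i = 0 then 1
  else if h : i ≤ d then cdf1 (δ ⟨i - 1, by omega⟩) t
  else 0

/-- The open set `Ψ^δ_i = {t ∈ (0,1) : δ_(i-1)(t) > δ_(i)(t)}`, for `1 ≤ i ≤ d+1`
(with the conventions `δ_(0) = 1` and `δ_(d+1) = 0`). -/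
def Psi (δ : Fin d → Measure ℝ) (i : ℕ) : Set ℝ :=
  Ioo 0 1 ∩ {t | dcdf δ i t < dcdf δ (i - 1) t}

/-- Left endpoint of the connected component of `U` containing `t`. -/
def lend (U : Set ℝ) (t : ℝ) : ℝ := sSup {s | s ≤ t ∧ s ∉ U}

/-- Right endpoint of the connected component of `U` containing `t`. -/
def rend (U : Set ℝ) (t : ℝ) : ℝ := sInf {s | t ≤ s ∧ s ∉ U}

/-- Midpoint `m_i^{(j)}` of the connected component of `U` containing `t`. -/
def midpt (U : Set ℝ) (t : ℝ) : ℝ := (lend U t + rend U t) / 2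

/-- The integrand `δ'_(i)(s) / (δ_(i-1)(s) − δ_(i)(s))` (that is, `K'_i`). -/
def kInt (δ : Fin d → Measure ℝ) (i : ℕ) (s : ℝ) : ℝ :=
  deriv (dcdf δ i) s / (dcdf δ (i - 1) s - dcdf δ i s)

/-- `K_i(t)`, integrating `K'_i` from the midpoint of the connected component of `Ψ^δ_i`
containing `t` (note `K_{d+1} = 0` holds automatically, `δ_(d+1)` being constant). -/
def Kfun (δ : Fin d → Measure ℝ) (i : ℕ) (t : ℝ) : ℝ :=
  ∫ s in (midpt (Psi δ i) t)..t, kInt δ i s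

/-- The function `a_i(t) = K'_i(t) e^{K_{i+1}(t) − K_i(t)} 1_{Ψ^δ_i ∩ Ψ^δ_{i+1}}(t)`. -/
def aFun (δ : Fin d → Measure ℝ) (i : ℕ) : ℝ → ℝ :=
  (Psi δ i ∩ Psi δ (i + 1)).indicator fun t =>
    kInt δ i t * Real.exp (Kfun δ (i + 1) t - Kfun δ i t)

/-- The set `L_δ` of `u ∈ [0,1]^d` such that `(u_(i-1), u_(i)) ⊆ Ψ^δ_i` for all `2 ≤ i ≤ d`. -/
def Lset [NeZero d] (δ : Fin d → Measure ℝ) : Set (Fin d → ℝ) :=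
  {u | (∀ j, u j ∈ Icc (0 : ℝ) 1) ∧
    ∀ i : Fin d, i ≠ 0 → Ioo (orderStat u (i - 1)) (orderStat u i) ⊆ Psi δ (i.val + 1)}

/-- The density `c_δ(u) = (1/d!) 1_{L_δ}(u) ∏_{i=1}^d a_i(u_(i))` of the maximum entropy copula
with multidiagonal `δ`. -/
def cDelta [NeZero d] (δ : Fin d → Measure ℝ) : (Fin d → ℝ) → ℝ :=
  (Lset δ).indicator fun u =>
    (d.factorial : ℝ)⁻¹ * ∏ i : Fin d, aFun δ (i.val + 1) (orderStat u i)

/-- The maximum entropy copula `C_δ` with multidiagonal `δ` : the measure with density `c_δ`. -/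
def CDelta [NeZero d] (δ : Fin d → Measure ℝ) : Measure (Fin d → ℝ) :=
  (volume : Measure (Fin d → ℝ)).withDensity fun u => ENNReal.ofReal (cDelta δ u)

/-- The density of a one-dimensional measure `ν` with respect to Lebesgue measure. -/
def densOf (ν : Measure ℝ) (t : ℝ) : ℝ := (ν.rnDeriv volume t).toReal

/-- The function `ℓ_i(t) = f_i(t) / (F_{i-1}(t) − F_i(t))`. -/
def ellF [NeZero d] (F : Fin d → Measure ℝ) (i : Fin d) (t : ℝ) : ℝ :=
  densOf (F i) t / (cdf1 (F (i - 1)) t - cdf1 (F i) t)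

/-- The set `L^F` of ordered vectors `x ∈ ℝ^d` such that `F_{i-1}(t) > F_i(t)` for all
`t ∈ (x_{i-1}, x_i)` and all `2 ≤ i ≤ d`. -/
def LsetF [NeZero d] (F : Fin d → Measure ℝ) : Set (Fin d → ℝ) :=
  {x | Monotone x ∧ ∀ i : Fin d, i ≠ 0 →
    ∀ t ∈ Ioo (x (i - 1)) (x i), cdf1 (F i) t < cdf1 (F (i - 1)) t}

/-- The density `f_F` of the maximum entropy distribution of order statistics with marginal
cdfs `F` :
`f_F(x) = f_1(x_1) ∏_{i=2}^d ℓ_i(x_i) exp(−∫_{x_{i-1}}^{x_i} ℓ_i(s) ds) 1_{L^F}(x)`. -/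
def fF [NeZero d] (F : Fin d → Measure ℝ) : (Fin d → ℝ) → ℝ :=
  (LsetF F).indicator fun x =>
    densOf (F 0) (x 0) *
      ∏ i ∈ Finset.univ.erase (0 : Fin d),
        ellF F i (x i) * Real.exp (-∫ s in (x (i - 1))..(x i), ellF F i s)

/-!
Let `X ∼ μ` have marginals `F`. Every marginal of `X_Π` has cdf `G`, so `S_F` maps the copula `C` of
`X` to the symmetrization of the law `ν` of `(G(X_1), …, G(X_d))`. The marginals of `ν` are the
`δ_(i)`, which are absolutely continuous because their average is uniform. As level sets of `G` are
null, `F_i = δ_(i) ∘ G`, so `C` is the image of `ν` under `T = (δ_(1), …, δ_(d))`.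

When `X` is ordered, `ν` is carried by nondecreasing vectors, so sorting recovers it from its
symmetrization; hence `S_F` is injective, and the density of `S_F(C)` at `u` is `1/d!` times that of
`ν` at the ordered vector. To compare `ν` with `C`, let `λ` be the product of the laws `δ_(i)`: its
density is `∏ δ'_(i)`, its image under `T` is uniform on the cube, and the quantile functions
almost surely invert `T`. Consequently `ν` and `C` are absolutely continuous together, and then
`dν/dλ = c ∘ T`.
-/

section Cdf

variable (m : Measure ℝ)

lemma cdf1_nonneg (t : ℝ) : 0 ≤ cdf1 m t := measureReal_nonneg

lemma monotone_cdf1 [IsFiniteMeasure m] : Monotone (cdf1 m) :=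
  fun _ _ hst => measureReal_mono (Iic_subset_Iic.2 hst)

lemma measurable_cdf1 [IsFiniteMeasure m] : Measurable (cdf1 m) := (monotone_cdf1 m).measurable

lemma ofReal_cdf1 [IsFiniteMeasure m] (t : ℝ) : ENNReal.ofReal (cdf1 m t) = m (Iic t) :=
  ENNReal.ofReal_toReal (measure_ne_top m _)

/-- A compact subset of a level set of the cdf lies between two points of the level set. -/
lemma ae_cdf1_ne [IsFiniteMeasure m] [NullSingletonClass m] (c : ℝ) :
    ∀ᵐ x ∂m, cdf1 m x ≠ c := by
  have hmeas : MeasurableSet {x | cdf1 m x = c} := measurable_cdf1 m (measurableSet_singleton c)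
  simp only [ae_iff, not_not, hmeas.measure_eq_iSup_isCompact, ENNReal.iSup_eq_zero]
  intro K hKc hK
  rcases K.eq_empty_or_nonempty with rfl | hne
  · exact measure_empty
  obtain ⟨a, ha⟩ := hK.exists_isLeast hne
  obtain ⟨b, hb⟩ := hK.exists_isGreatest hne
  have hab : m (Iic a) = m (Iic b) := by
    rw [← ofReal_cdf1, ← ofReal_cdf1, hKc ha.1, hKc hb.1]
  have hKab : K ⊆ Icc a b := fun x hx => ⟨ha.2 hx, hb.2 hx⟩
  refine measure_mono_null hKab ?_
  rw [← measure_congr Ioc_ae_eq_Icc, ← Iic_sdiff_Iic,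
    measure_sdiff (Iic_subset_Iic.2 (ha.2 hb.1)) nullMeasurableSet_Iic (measure_ne_top m _), hab,
    tsub_self]

lemma preimage_cdf1_Iic_ae_eq [IsFiniteMeasure m] [NullSingletonClass m] (t : ℝ) :
    cdf1 m ⁻¹' Iic (cdf1 m t) =ᵐ[m] Iic t := by
  filter_upwards [ae_cdf1_ne m (cdf1 m t)] with x hx
  refine propext ⟨fun hxt => ?_, fun hxt => monotone_cdf1 m hxt⟩
  exact ((monotone_cdf1 m).reflect_lt (lt_of_le_of_ne hxt hx)).le

/-- The quantile function fails to be a left inverse of the cdf only on flat parts of the cdf, each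
of which shares its level with a rational point. -/
lemma ae_qReal_cdf1 [IsFiniteMeasure m] [NullSingletonClass m] :
    ∀ᵐ x ∂m, qReal m (cdf1 m x) = x := by
  filter_upwards [ae_all_iff.2 fun r : ℚ => ae_cdf1_ne m (cdf1 m r)] with x hx
  have hleast : IsLeast {s | cdf1 m x ≤ cdf1 m s} x := by
    refine ⟨le_refl (cdf1 m x), fun s hs => ?_⟩
    by_contra! hsx
    obtain ⟨r, hsr, hrx⟩ := exists_rat_btwn hsx
    exact hx r (le_antisymm (le_trans hs (monotone_cdf1 m hsr.le)) (monotone_cdf1 m hrx.le))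
  exact hleast.csInf_eq

variable [IsProbabilityMeasure m]

lemma cdf1_eq_cdf : cdf1 m = ProbabilityTheory.cdf m :=
  funext fun t => (ProbabilityTheory.cdf_eq_real m t).symm

lemma cdf1_le_one (t : ℝ) : cdf1 m t ≤ 1 := measureReal_le_one

lemma continuous_cdf1 [NullSingletonClass m] : Continuous (cdf1 m) := by
  refine continuous_iff_continuousAt.2 fun t => ?_
  have hjump := (ProbabilityTheory.cdf m).measure_singleton t
  rw [ProbabilityTheory.measure_cdf, measure_singleton, eq_comm, ENNReal.ofReal_eq_zero] at hjump
  rw [(monotone_cdf1 m).continuousAt_iff_leftLim_eq_rightLim, cdf1_eq_cdf,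
    StieltjesFunction.rightLim_eq]
  exact ((ProbabilityTheory.monotone_cdf m).leftLim_le le_rfl).antisymm (sub_nonpos.1 hjump)

lemma exists_cdf1_lt {t : ℝ} (ht : 0 < t) : ∃ s, cdf1 m s < t := by
  rw [cdf1_eq_cdf]
  exact ((ProbabilityTheory.tendsto_cdf_atBot m).eventually (gt_mem_nhds ht)).exists

lemma exists_lt_cdf1 {t : ℝ} (ht : t < 1) : ∃ s, t < cdf1 m s := by
  rw [cdf1_eq_cdf]
  exact ((ProbabilityTheory.tendsto_cdf_atTop m).eventually (lt_mem_nhds ht)).exists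

lemma Ioo_subset_range_cdf1 [NullSingletonClass m] : Ioo 0 1 ⊆ range (cdf1 m) := by
  intro t ht
  obtain ⟨a, ha⟩ := exists_cdf1_lt m ht.1
  obtain ⟨b, hb⟩ := exists_lt_cdf1 m ht.2
  exact mem_range_of_exists_le_of_exists_ge (continuous_cdf1 m) ⟨a, ha.le⟩ ⟨b, hb.le⟩

instance isProbabilityMeasure_uniform01 : IsProbabilityMeasure uniform01 :=
  ⟨by simp [uniform01]⟩

lemma uniform01_Iic (t : ℝ) : uniform01 (Iic t) = ENNReal.ofReal (min t 1) := by
  have hinter : Iic t ∩ Icc 0 1 = Icc 0 (min t 1) := by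
    rw [← Ici_inter_Iic, ← Ici_inter_Iic, ← Iic_inter_Iic, inter_left_comm]
  rw [uniform01, Measure.restrict_apply measurableSet_Iic, hinter, Real.volume_Icc, sub_zero]

lemma map_cdf1_eq_uniform01 [NullSingletonClass m] : m.map (cdf1 m) = uniform01 := by
  have := Measure.isProbabilityMeasure_map (μ := m) (measurable_cdf1 m).aemeasurable
  refine Measure.ext_of_Iic _ _ fun t => ?_
  rw [Measure.map_apply (measurable_cdf1 m) measurableSet_Iic, uniform01_Iic]
  rcases le_or_gt t 0 with ht0 | ht0
  · rw [ENNReal.ofReal_of_nonpos ((min_le_left _ _).trans ht0)]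
    refine measure_mono_null (fun x hx => ?_) (ae_iff.1 (ae_cdf1_ne m 0))
    exact not_not.2 (le_antisymm (le_trans hx ht0) (cdf1_nonneg m x))
  rcases lt_or_ge t 1 with ht1 | ht1
  · obtain ⟨s, rfl⟩ := Ioo_subset_range_cdf1 m ⟨ht0, ht1⟩
    rw [measure_congr (preimage_cdf1_Iic_ae_eq m s), min_eq_left ht1.le, ofReal_cdf1]
  · rw [min_eq_right ht1, ENNReal.ofReal_one, ← measure_univ (μ := m)]
    exact congrArg m (eq_univ_of_forall fun x => (cdf1_le_one m x).trans ht1)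

lemma monotoneOn_qReal : MonotoneOn (qReal m) (Ioo 0 1) := by
  intro s hs t ht hst
  obtain ⟨a, ha⟩ := exists_cdf1_lt m hs.1
  obtain ⟨b, hb⟩ := exists_lt_cdf1 m ht.2
  refine csInf_le_csInf ⟨a, fun x hx => ?_⟩ ⟨b, hb.le⟩ fun x hx => hst.trans hx
  exact ((monotone_cdf1 m).reflect_lt (ha.trans_le hx)).le

lemma aemeasurable_qReal : AEMeasurable (qReal m) uniform01 := by
  rw [uniform01, ← Measure.restrict_congr_set Ioo_ae_eq_Icc]
  exact aemeasurable_restrict_of_monotoneOn measurableSet_Ioo (monotoneOn_qReal m)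

lemma withDensity_deriv_cdf1 (hm : m ≪ volume) :
    volume.withDensity (fun t => ENNReal.ofReal (deriv (cdf1 m) t)) = m := by
  have hderiv := (ProbabilityTheory.cdf m).ae_hasDerivAt
  rw [ProbabilityTheory.measure_cdf, ← cdf1_eq_cdf] at hderiv
  conv_rhs => rw [← Measure.withDensity_rnDeriv_eq m volume hm]
  refine withDensity_congr_ae ?_
  filter_upwards [hderiv, m.rnDeriv_lt_top volume] with t ht hfin
  rw [ht.deriv, ENNReal.ofReal_toReal hfin.ne]

end Cdf

section Density

lemma ae_forall_eval_of_absolutelyContinuous {ι : Type*} [Countable ι] {X : ι → Type*}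
    [∀ i, MeasurableSpace (X i)] {ν : Measure (∀ i, X i)} {m : ∀ i, Measure (X i)}
    (hν : ∀ i, ν.map (Function.eval i) ≪ m i) {p : ∀ i, X i → Prop}
    (hp : ∀ i, ∀ᵐ t ∂m i, p i t) : ∀ᵐ x ∂ν, ∀ i, p i (x i) :=
  ae_all_iff.2 fun i => ae_of_ae_map (measurable_pi_apply i).aemeasurable ((hν i).ae_le (hp i))

lemma map_withDensity_comp {α β : Type*} [MeasurableSpace α] [MeasurableSpace β] (μ : Measure α)
    {f : α → β} (hf : Measurable f) {g : β → ℝ≥0∞} (hg : Measurable g) :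
    (μ.withDensity (g ∘ f)).map f = (μ.map f).withDensity g := by
  ext s hs
  rw [Measure.map_apply hf hs, withDensity_apply _ (hf hs), withDensity_apply _ hs,
    setLIntegral_map hs hg hf, Function.comp_def]

lemma absolutelyContinuous_withDensity {α : Type*} [MeasurableSpace α] {μ ν : Measure α}
    {f : α → ℝ≥0∞} (hf : Measurable f) (hν : ν ≪ μ) (hpos : ∀ᵐ x ∂ν, f x ≠ 0) :
    ν ≪ μ.withDensity f := by
  refine Measure.AbsolutelyContinuous.mk fun s _ h0 => ?_
  rw [withDensity_apply_eq_zero hf] at h0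
  refine measure_mono_null (fun x hx => ?_) (measure_union_null (hν h0) (ae_iff.1 hpos))
  by_cases hfx : f x = 0
  · exact Or.inr (not_not.2 hfx)
  · exact Or.inl ⟨hfx, hx⟩

variable {ι : Type*} {X : ι → Type*} [∀ i, MeasurableSpace (X i)]

lemma measurable_prod_apply {f : ∀ i, X i → ℝ≥0∞} (hf : ∀ i, Measurable (f i)) (s : Finset ι) :
    Measurable fun x : ∀ i, X i => ∏ i ∈ s, f i (x i) :=
  Finset.measurable_prod s fun i _ => (hf i).comp (measurable_pi_apply i)

variable (μ : ∀ i, Measure (X i)) [∀ i, SigmaFinite (μ i)] {f : ∀ i, X i → ℝ≥0∞}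

lemma lmarginal_prod_apply [DecidableEq ι] (hf : ∀ i, Measurable (f i)) (s : Finset ι) :
    (∫⋯∫⁻_s, fun x => ∏ i ∈ s, f i (x i) ∂μ) = fun _ => ∏ i ∈ s, ∫⁻ t, f i t ∂μ i := by
  induction s using Finset.induction_on with
  | empty => simp only [lmarginal_empty, Finset.prod_empty]
  | insert i s hi ih =>
    have hupdate (x : ∀ j, X j) (t : X i) :
        ∏ j ∈ insert i s, f j (Function.update x i t j) = f i t * ∏ j ∈ s, f j (x j) := by
      rw [Finset.prod_insert hi, Function.update_self]
      congr 1
      exact Finset.prod_congr rfl fun j hj => by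
        rw [Function.update_of_ne (ne_of_mem_of_not_mem hj hi)]
    rw [lmarginal_insert' _ (measurable_prod_apply hf _) hi]
    simp only [hupdate, lintegral_mul_const _ (hf i), Finset.prod_insert hi]
    funext x
    rw [← congrFun ih x]
    exact lintegral_const_mul _ ((measurable_prod_apply hf s).comp measurable_updateFinset)

variable [Fintype ι]

lemma lintegral_fintype_prod (hf : ∀ i, Measurable (f i)) :
    ∫⁻ x, ∏ i, f i (x i) ∂Measure.pi μ = ∏ i, ∫⁻ t, f i t ∂μ i := by
  classical
  rcases isEmpty_or_nonempty (∀ i, X i) with hempty | ⟨⟨x⟩⟩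
  · obtain ⟨i, hi⟩ := isEmpty_pi.1 hempty
    rw [lintegral_of_isEmpty, Finset.prod_eq_zero (Finset.mem_univ i) (lintegral_of_isEmpty _ _)]
  · rw [lintegral_eq_lmarginal_univ x, lmarginal_prod_apply μ hf]

lemma pi_withDensity (hf : ∀ i, Measurable (f i)) [∀ i, SigmaFinite ((μ i).withDensity (f i))] :
    Measure.pi (fun i => (μ i).withDensity (f i)) =
      (Measure.pi μ).withDensity fun x => ∏ i, f i (x i) := by
  refine Measure.pi_eq fun s hs => ?_
  rw [withDensity_apply _ (MeasurableSet.univ_pi hs), Measure.restrict_pi_pi,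
    lintegral_fintype_prod _ hf]
  exact Finset.prod_congr rfl fun i _ => (withDensity_apply _ (hs i)).symm

/-- Since `ν` has marginals dominated by the `m i`, it does not charge the zeros of the density of
`Measure.pi m` with respect to `Measure.pi μ`. -/
lemma absolutelyContinuous_pi {m : ∀ i, Measure (X i)} [∀ i, SigmaFinite (m i)]
    (hm : ∀ i, m i ≪ μ i) {ν : Measure (∀ i, X i)} (hν : ν ≪ Measure.pi μ)
    (hmarg : ∀ i, ν.map (Function.eval i) ≪ m i) : ν ≪ Measure.pi m := by
  have hdens (i : ι) := Measure.withDensity_rnDeriv_eq (m i) (μ i) (hm i)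
  have hmeas (i : ι) := Measure.measurable_rnDeriv (m i) (μ i)
  have hpos : ∀ᵐ x ∂ν, ∀ i, (m i).rnDeriv (μ i) (x i) ≠ 0 :=
    ae_forall_eval_of_absolutelyContinuous hmarg fun i =>
      (Measure.rnDeriv_pos (hm i)).mono fun _ => ne_of_gt
  have hpi := pi_withDensity μ hmeas
  simp only [hdens] at hpi
  rw [hpi]
  refine absolutelyContinuous_withDensity (measurable_prod_apply hmeas _) hν ?_
  exact hpos.mono fun x hx => Finset.prod_ne_zero_iff.2 fun i _ => hx i

end Density

section CdfMap

variable {ι : Type*}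

/-- Coordinatewise application of the cdfs of the laws `m i`. It maps a law with marginals `m` to
its copula. -/
def cdfMap (m : ι → Measure ℝ) (x : ι → ℝ) : ι → ℝ := fun i => cdf1 (m i) (x i)

/-- Coordinatewise application of the quantile functions of the laws `m i`. It maps a copula to the
law with marginals `m` and that copula. -/
def qMap (m : ι → Measure ℝ) (u : ι → ℝ) : ι → ℝ := fun i => qReal (m i) (u i)

variable (m : ι → Measure ℝ)

lemma measurable_cdfMap [∀ i, IsFiniteMeasure (m i)] : Measurable (cdfMap m) :=
  measurable_pi_lambda _ fun i => (measurable_cdf1 (m i)).comp (measurable_pi_apply i)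

variable [∀ i, IsProbabilityMeasure (m i)]

lemma cdfMap_mem_Icc (x : ι → ℝ) : cdfMap m x ∈ Icc 0 1 :=
  ⟨fun _ => cdf1_nonneg _ _, fun _ => cdf1_le_one _ _⟩

lemma pi_uniform01 [Fintype ι] :
    Measure.pi (fun _ : ι => uniform01) = (volume : Measure (ι → ℝ)).restrict (Icc 0 1) := by
  rw [← pi_univ_Icc, volume_pi, Measure.restrict_pi_pi]
  rfl

variable {m} in
lemma pi_eq_withDensity_deriv_cdf1 [Fintype ι] (hm : ∀ i, m i ≪ volume) : Measure.pi m =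
    volume.withDensity fun u => ∏ i, ENNReal.ofReal (deriv (cdf1 (m i)) (u i)) := by
  have hdens (i : ι) := withDensity_deriv_cdf1 (m i) (hm i)
  have (i : ι) : SigmaFinite (volume.withDensity fun t => ENNReal.ofReal (deriv (cdf1 (m i)) t)) :=
    by rw [hdens i]; infer_instance
  rw [volume_pi, ← pi_withDensity _ fun i => (measurable_deriv (cdf1 (m i))).ennreal_ofReal]
  simp only [hdens]

variable [∀ i, NullSingletonClass (m i)]

lemma map_cdfMap_pi [Fintype ι] :
    (Measure.pi m).map (cdfMap m) = Measure.pi fun _ => uniform01 := by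
  have hmap (i : ι) : (m i).map (cdf1 (m i)) = uniform01 := map_cdf1_eq_uniform01 (m i)
  have (i : ι) : SigmaFinite ((m i).map (cdf1 (m i))) := by rw [hmap i]; infer_instance
  refine (Measure.pi_map_pi fun i => (measurable_cdf1 (m i)).aemeasurable).trans ?_
  exact congrArg Measure.pi (funext hmap)

variable {m} {ν : Measure (ι → ℝ)}

lemma ae_qMap_cdfMap [Countable ι] (hν : ∀ i, ν.map (Function.eval i) ≪ m i) :
    qMap m ∘ cdfMap m =ᵐ[ν] id :=
  (ae_forall_eval_of_absolutelyContinuous hν fun i => ae_qReal_cdf1 (m i)).mono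
    fun _ hx => funext hx

lemma aemeasurable_qMap [Countable ι] (hν : ∀ i, ν.map (Function.eval i) ≪ m i) :
    AEMeasurable (qMap m) (ν.map (cdfMap m)) := by
  refine aemeasurable_pi_lambda _ fun i => ?_
  refine AEMeasurable.comp_measurable (g := qReal (m i)) ?_ (measurable_pi_apply i)
  have hmap : (ν.map (cdfMap m)).map (Function.eval i) =
      (ν.map (Function.eval i)).map (cdf1 (m i)) := by
    rw [Measure.map_map (measurable_pi_apply i) (measurable_cdfMap m),
      Measure.map_map (measurable_cdf1 (m i)) (measurable_pi_apply i)]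
    rfl
  refine (aemeasurable_qReal (m i)).mono_ac ?_
  rw [← map_cdf1_eq_uniform01 (m i)]
  exact hmap ▸ (hν i).map (measurable_cdf1 (m i))

lemma map_qMap_map_cdfMap [Countable ι] (hν : ∀ i, ν.map (Function.eval i) ≪ m i) :
    (ν.map (cdfMap m)).map (qMap m) = ν := by
  rw [AEMeasurable.map_map_of_aemeasurable (aemeasurable_qMap hν)
    (measurable_cdfMap m).aemeasurable, Measure.map_congr (ae_qMap_cdfMap hν), Measure.map_id]

variable [Fintype ι] [IsFiniteMeasure ν]

/-- Both laws have marginals dominated by the `m i` and the same image under the cdfs, and that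
image determines them. -/
lemma eq_pi_withDensity_rnDeriv
    (hν : ∀ i, ν.map (Function.eval i) ≪ m i) (hac : ν.map (cdfMap m) ≪ volume) :
    ν = (Measure.pi m).withDensity ((ν.map (cdfMap m)).rnDeriv volume ∘ cdfMap m) := by
  set C := ν.map (cdfMap m) with hC
  set ν' := (Measure.pi m).withDensity (C.rnDeriv volume ∘ cdfMap m)
  have hν' (i : ι) : ν'.map (Function.eval i) ≪ m i := by
    have h := (withDensity_absolutelyContinuous (Measure.pi m) (C.rnDeriv volume ∘ cdfMap m)).map
      (measurable_pi_apply i)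
    rwa [(measurePreserving_eval m i).map_eq] at h
  have hcube : ∀ᵐ u ∂C, u ∈ Icc 0 1 :=
    (ae_map_iff (measurable_cdfMap m).aemeasurable measurableSet_Icc).2
      (Filter.Eventually.of_forall (cdfMap_mem_Icc m))
  have hmap : ν'.map (cdfMap m) = C := by
    rw [map_withDensity_comp _ (measurable_cdfMap m) (Measure.measurable_rnDeriv _ _),
      map_cdfMap_pi, pi_uniform01, ← restrict_withDensity measurableSet_Icc,
      Measure.withDensity_rnDeriv_eq _ _ hac, Measure.restrict_eq_self_of_ae_mem hcube]
  rw [← map_qMap_map_cdfMap hν', hmap, hC, map_qMap_map_cdfMap hν]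

/-- The product of the `m i` dominates any absolutely continuous law with marginals dominated by the
`m i`, and its image under the cdfs is the uniform law on the cube. -/
lemma map_cdfMap_absolutelyContinuous_iff
    (hν : ∀ i, ν.map (Function.eval i) ≪ m i) (hm : ∀ i, m i ≪ volume) :
    ν.map (cdfMap m) ≪ volume ↔ ν ≪ volume := by
  constructor
  · intro hac
    refine (eq_pi_withDensity_rnDeriv hν hac).absolutelyContinuous.trans ?_
    refine (withDensity_absolutelyContinuous _ _).trans ?_
    rw [pi_eq_withDensity_deriv_cdf1 hm]
    exact withDensity_absolutelyContinuous _ _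
  · intro hac
    have h := (absolutelyContinuous_pi _ hm hac hν).map (measurable_cdfMap m)
    rw [map_cdfMap_pi, pi_uniform01] at h
    exact h.trans Measure.absolutelyContinuous_restrict

end CdfMap

section Symmetrize

lemma measurable_perm {ι α : Type*} [MeasurableSpace α] (π : Equiv.Perm ι) :
    Measurable fun (x : ι → α) i => x (π i) :=
  measurable_pi_lambda _ fun i => measurable_pi_apply (π i)

lemma map_perm_volume {ι : Type*} [Fintype ι] (π : Equiv.Perm ι) :
    (volume : Measure (ι → ℝ)).map (fun x i => x (π i)) = volume :=
  (volume_preserving_arrowCongr' π.symm (MeasurableEquiv.refl ℝ) (.id volume)).map_eq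

lemma ae_injective {ι : Type*} [Fintype ι] :
    ∀ᵐ u ∂(volume : Measure (ι → ℝ)), Function.Injective u := by
  classical
  have hdiag (i j : ι) (hij : i ≠ j) : ∀ᵐ u ∂(volume : Measure (ι → ℝ)), u i ≠ u j := by
    let E : Submodule ℝ (ι → ℝ) :=
      LinearMap.ker (LinearMap.proj (R := ℝ) (φ := fun _ => ℝ) i - LinearMap.proj j)
    have hE : E ≠ ⊤ := fun htop => by
      have hsingle : (Pi.single i 1 : ι → ℝ) ∈ E := htop ▸ Submodule.mem_top
      simp [E, hij.symm] at hsingle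
    refine measure_mono_null (fun u hu => ?_) (Measure.addHaar_submodule volume E hE)
    exact sub_eq_zero.2 (not_not.1 hu)
  have hall : ∀ᵐ u ∂(volume : Measure (ι → ℝ)), ∀ i j, i ≠ j → u i ≠ u j := by
    simpa only [ae_all_iff] using hdiag
  filter_upwards [hall] with u hu i j using not_imp_not.1 (hu i j)

lemma sum_perm_apply {ι M : Type*} [Fintype ι] [DecidableEq ι] [AddCommMonoid M] (f : ι → M)
    (i : ι) : Fintype.card ι • ∑ π : Equiv.Perm ι, f (π i) =
      (Fintype.card ι).factorial • ∑ j, f j := by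
  have hindep (j : ι) : ∑ π : Equiv.Perm ι, f (π j) = ∑ π : Equiv.Perm ι, f (π i) := by
    rw [← Equiv.sum_comp (Equiv.mulRight (Equiv.swap i j))]
    simp only [Equiv.coe_mulRight, Equiv.Perm.mul_apply, Equiv.swap_apply_right]
  calc Fintype.card ι • ∑ π : Equiv.Perm ι, f (π i)
      = ∑ j, ∑ π : Equiv.Perm ι, f (π j) := by
        simp only [hindep, Finset.sum_const, Finset.card_univ]
    _ = ∑ π : Equiv.Perm ι, ∑ j, f (π j) := Finset.sum_comm
    _ = (Fintype.card ι).factorial • ∑ j, f j := by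
        simp only [Equiv.sum_comp, Finset.sum_const, Finset.card_univ, Fintype.card_perm]

lemma map_symmetrize {α : Type*} [MeasurableSpace α] (μ : Measure (Fin d → ℝ))
    {f : (Fin d → ℝ) → α} (hf : Measurable f) :
    (symmetrize μ).map f =
      (d.factorial : ℝ≥0∞)⁻¹ • ∑ π : Equiv.Perm (Fin d), μ.map fun x => f fun i => x (π i) := by
  rw [symmetrize, Measure.map_smul, ← Measure.mapₗ_apply_of_measurable hf, map_sum]
  simp only [Measure.mapₗ_apply_of_measurable hf, Measure.map_map hf (measurable_perm _)]
  rfl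

lemma symmetrize_map_coordinatewise (μ : Measure (Fin d → ℝ)) {g : ℝ → ℝ} (hg : Measurable g) :
    (symmetrize μ).map (fun x i => g (x i)) = symmetrize (μ.map fun x i => g (x i)) := by
  have hmeas : Measurable fun (x : Fin d → ℝ) i => g (x i) :=
    measurable_pi_lambda _ fun i => hg.comp (measurable_pi_apply i)
  rw [map_symmetrize μ hmeas, symmetrize]
  simp only [Measure.map_map (measurable_perm _) hmeas]
  rfl

lemma symmetrize_absolutelyContinuous_iff {ν : Measure (Fin d → ℝ)} :
    symmetrize ν ≪ volume ↔ ν ≪ volume := by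
  rw [symmetrize, ← Measure.sum_fintype]
  constructor
  · refine Measure.AbsolutelyContinuous.trans ?_
    refine Measure.AbsolutelyContinuous.trans ?_ <|
      Measure.absolutelyContinuous_smul (ENNReal.inv_ne_zero.2 (ENNReal.natCast_ne_top _))
    exact Measure.absolutelyContinuous_sum_right 1 Measure.map_id.symm.absolutelyContinuous
  · intro h
    refine Measure.AbsolutelyContinuous.smul_left ?_ _
    refine Measure.absolutelyContinuous_sum_left fun π => ?_
    simpa only [map_perm_volume] using h.map (measurable_perm π)

lemma orderStat_perm (x : Fin d → ℝ) (π : Equiv.Perm (Fin d)) :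
    orderStat (fun i => x (π i)) = orderStat x :=
  Tuple.comp_perm_comp_sort_eq_comp_sort

lemma orderStat_of_monotone {x : Fin d → ℝ} (hx : Monotone x) : orderStat x = x :=
  (Tuple.comp_sort_eq_comp_iff_monotone (σ := 1)).2 hx |>.symm

lemma measurable_orderStat : Measurable (orderStat (d := d)) := by
  intro s hs
  have hpre : orderStat ⁻¹' s = ⋃ π : Equiv.Perm (Fin d),
      (fun (x : Fin d → ℝ) i => x (π i)) ⁻¹' ({x | Monotone x} ∩ s) := by
    ext x
    simp only [mem_preimage, mem_iUnion]
    refine ⟨fun hx => ⟨Tuple.sort x, Tuple.monotone_sort x, hx⟩, ?_⟩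
    rintro ⟨π, hmono, hπ⟩
    rwa [← orderStat_perm x π, orderStat_of_monotone hmono]
  rw [hpre]
  exact .iUnion fun π => measurable_perm π (isClosed_monotone.measurableSet.inter hs)

lemma map_orderStat_symmetrize (ν : Measure (Fin d → ℝ)) :
    (symmetrize ν).map orderStat = ν.map orderStat := by
  have hd : (d.factorial : ℝ≥0∞) ≠ 0 := Nat.cast_ne_zero.2 d.factorial_ne_zero
  rw [map_symmetrize ν measurable_orderStat]
  simp only [orderStat_perm, Finset.sum_const, Finset.card_univ, Fintype.card_perm,
    Fintype.card_fin]
  rw [← Nat.cast_smul_eq_nsmul ℝ≥0∞, smul_smul,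
    ENNReal.inv_mul_cancel hd (ENNReal.natCast_ne_top _), one_smul]

lemma map_orderStat_of_ae_monotone {ν : Measure (Fin d → ℝ)} (hν : ∀ᵐ x ∂ν, Monotone x) :
    ν.map orderStat = ν := by
  rw [Measure.map_congr (hν.mono fun x => orderStat_of_monotone), Measure.map_id']

lemma injOn_symmetrize :
    InjOn symmetrize {ν : Measure (Fin d → ℝ) | ∀ᵐ x ∂ν, Monotone x} :=
  LeftInvOn.injOn (f₁' := Measure.map orderStat) fun ν hν =>
    (map_orderStat_symmetrize ν).trans (map_orderStat_of_ae_monotone hν)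

lemma map_perm_withDensity {g : (Fin d → ℝ) → ℝ≥0∞} (hg : Measurable g)
    (π : Equiv.Perm (Fin d)) :
    ((volume : Measure (Fin d → ℝ)).withDensity g).map (fun x i => x (π i)) =
      volume.withDensity fun u => g fun i => u (π⁻¹ i) := by
  have h := map_withDensity_comp volume (measurable_perm π) (hg.comp (measurable_perm π⁻¹))
  rw [map_perm_volume] at h
  refine Eq.trans ?_ h
  congr 2
  funext u
  simp only [Function.comp_apply, Equiv.Perm.coe_inv, Equiv.apply_symm_apply]

lemma symmetrize_withDensity {g : (Fin d → ℝ) → ℝ≥0∞} (hg : Measurable g) :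
    symmetrize ((volume : Measure (Fin d → ℝ)).withDensity g) =
      volume.withDensity fun u =>
        (d.factorial : ℝ≥0∞)⁻¹ * ∑ π : Equiv.Perm (Fin d), g fun i => u (π i) := by
  have hgπ (π : Equiv.Perm (Fin d)) : Measurable fun u : Fin d → ℝ => g fun i => u (π i) :=
    hg.comp (measurable_perm π)
  have hsum : (∑ π : Equiv.Perm (Fin d), volume.withDensity fun u : Fin d → ℝ =>
      g fun i => u (π i)) =
        volume.withDensity fun u => ∑ π : Equiv.Perm (Fin d), g fun i => u (π i) := by
    rw [← Measure.sum_fintype, ← withDensity_tsum hgπ]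
    congr 1
    ext u
    simp
  rw [symmetrize, ← Equiv.sum_comp (Equiv.inv (Equiv.Perm (Fin d)))]
  simp only [Equiv.inv_apply, map_perm_withDensity hg, inv_inv, hsum]
  exact (withDensity_smul _ (Finset.measurable_sum _ fun π _ => hgπ π)).symm

/-- At a vector with distinct entries only the sorting permutation contributes. -/
lemma sum_perm_eq_apply_orderStat {g : (Fin d → ℝ) → ℝ≥0∞} {u : Fin d → ℝ}
    (hu : Function.Injective u)
    (hg : ∀ π : Equiv.Perm (Fin d), ¬ Monotone (fun i => u (π i)) → g (fun i => u (π i)) = 0) :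
    ∑ π : Equiv.Perm (Fin d), g (fun i => u (π i)) = g (orderStat u) := by
  refine Finset.sum_eq_single (Tuple.sort u) (fun π _ hπ => hg π fun hmono => hπ ?_)
    fun h => absurd (Finset.mem_univ _) h
  have hsort : u ∘ π = u ∘ Tuple.sort u := Tuple.comp_sort_eq_comp_iff_monotone.2 hmono
  exact Equiv.ext fun i => hu (congrFun hsort i)

lemma rnDeriv_symmetrize_withDensity {g : (Fin d → ℝ) → ℝ≥0∞} (hg : Measurable g)
    (hmono : ∀ᵐ x ∂(volume : Measure (Fin d → ℝ)).withDensity g, Monotone x) :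
    (symmetrize (volume.withDensity g)).rnDeriv volume =ᵐ[volume]
      fun u => (d.factorial : ℝ≥0∞)⁻¹ * g (orderStat u) := by
  have hsum : Measurable fun u : Fin d → ℝ =>
      (d.factorial : ℝ≥0∞)⁻¹ * ∑ π : Equiv.Perm (Fin d), g fun i => u (π i) :=
    (Finset.measurable_sum _ fun π _ => hg.comp (measurable_perm π)).const_mul _
  have hzero : ∀ᵐ u ∂(volume : Measure (Fin d → ℝ)), ¬ Monotone u → g u = 0 :=
    ((ae_withDensity_iff hg).1 hmono).mono fun _ => not_imp_comm.1
  have hzero_perm : ∀ᵐ u ∂(volume : Measure (Fin d → ℝ)), ∀ π : Equiv.Perm (Fin d),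
      ¬ Monotone (fun i => u (π i)) → g (fun i => u (π i)) = 0 :=
    ae_all_iff.2 fun π =>
      ae_of_ae_map (measurable_perm π).aemeasurable (by rwa [map_perm_volume])
  rw [symmetrize_withDensity hg]
  filter_upwards [Measure.rnDeriv_withDensity volume hsum, hzero_perm, ae_injective]
    with u hu hgu hinj
  rw [hu, sum_perm_eq_apply_orderStat hinj hgu]

end Symmetrize

section AverageLaw

variable (F : Fin d → Measure ℝ)

/-- The average of the laws `F i`. Its cdf is `G`, and it is the common marginal of `X_Π` when `X`
has marginals `F`. -/
def avgLaw : Measure ℝ := (d : ℝ≥0∞)⁻¹ • ∑ i, F i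

lemma absolutelyContinuous_avgLaw (i : Fin d) : F i ≪ avgLaw F := by
  rw [avgLaw, ← Measure.sum_fintype]
  exact (Measure.absolutelyContinuous_sum_right i .rfl).trans <|
    Measure.absolutelyContinuous_smul (ENNReal.inv_ne_zero.2 (ENNReal.natCast_ne_top d))

instance nullSingletonClass_avgLaw [∀ i, NullSingletonClass (F i)] :
    NullSingletonClass (avgLaw F) :=
  ⟨fun t => by simp [avgLaw]⟩

lemma marg_symmetrize (μ : Measure (Fin d → ℝ)) (i : Fin d) :
    marg (symmetrize μ) i = avgLaw (marg μ) := by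
  have hd : (d : ℝ≥0∞) ≠ 0 := Nat.cast_ne_zero.2 i.pos.ne'
  have hfact : (d.factorial : ℝ≥0∞) ≠ 0 := Nat.cast_ne_zero.2 d.factorial_ne_zero
  have hsum := sum_perm_apply (marg μ) i
  rw [Fintype.card_fin, ← Nat.cast_smul_eq_nsmul ℝ≥0∞, ← Nat.cast_smul_eq_nsmul ℝ≥0∞] at hsum
  calc marg (symmetrize μ) i
      = (d.factorial : ℝ≥0∞)⁻¹ • ∑ π : Equiv.Perm (Fin d), marg μ (π i) :=
        map_symmetrize μ (measurable_pi_apply i)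
    _ = (d.factorial : ℝ≥0∞)⁻¹ • (d : ℝ≥0∞)⁻¹ • (d : ℝ≥0∞) •
          ∑ π : Equiv.Perm (Fin d), marg μ (π i) := by
        rw [smul_smul (d : ℝ≥0∞)⁻¹, ENNReal.inv_mul_cancel hd (ENNReal.natCast_ne_top _), one_smul]
    _ = avgLaw (marg μ) := by
        rw [hsum, smul_comm, smul_smul (d.factorial : ℝ≥0∞)⁻¹,
          ENNReal.inv_mul_cancel hfact (ENNReal.natCast_ne_top _), one_smul, avgLaw]

variable [∀ i, IsProbabilityMeasure (F i)]

lemma isProbabilityMeasure_avgLaw [NeZero d] : IsProbabilityMeasure (avgLaw F) := by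
  refine ⟨?_⟩
  simp only [avgLaw, Measure.smul_apply, Measure.finsetSum_apply, measure_univ, Finset.sum_const,
    Finset.card_univ, Fintype.card_fin, nsmul_eq_mul, mul_one, smul_eq_mul]
  exact ENNReal.inv_mul_cancel (Nat.cast_ne_zero.2 (NeZero.ne d)) (ENNReal.natCast_ne_top _)

lemma cdf1_avgLaw : cdf1 (avgLaw F) = Gbar F := by
  funext t
  rw [cdf1, avgLaw, Measure.smul_apply, Measure.finsetSum_apply, smul_eq_mul, ENNReal.toReal_mul,
    ENNReal.toReal_sum fun i _ => measure_ne_top _ _, Gbar, ENNReal.toReal_inv,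
    ENNReal.toReal_natCast, div_eq_inv_mul]
  rfl

lemma monotone_Gbar : Monotone (Gbar F) := fun _ _ hst =>
  div_le_div_of_nonneg_right (Finset.sum_le_sum fun i _ => monotone_cdf1 (F i) hst) d.cast_nonneg

lemma measurable_Gbar : Measurable (Gbar F) := (monotone_Gbar F).measurable

instance isProbabilityMeasure_mdiagF (i : Fin d) : IsProbabilityMeasure (mdiagF F i) :=
  Measure.isProbabilityMeasure_map (measurable_Gbar F).aemeasurable

variable [∀ i, NullSingletonClass (F i)]

/-- The average of the `mdiagF F i` is the uniform law. -/
lemma mdiagF_absolutelyContinuous (i : Fin d) : mdiagF F i ≪ volume := by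
  have : NeZero d := ⟨i.pos.ne'⟩
  have := isProbabilityMeasure_avgLaw F
  have h := (absolutelyContinuous_avgLaw F i).map (measurable_Gbar F)
  rw [← cdf1_avgLaw, map_cdf1_eq_uniform01, cdf1_avgLaw] at h
  exact h.trans Measure.absolutelyContinuous_restrict

instance nullSingletonClass_mdiagF (i : Fin d) : NullSingletonClass (mdiagF F i) :=
  ⟨fun _ => mdiagF_absolutelyContinuous F i Real.volume_singleton⟩

lemma cdf1_mdiagF_Gbar (i : Fin d) (t : ℝ) : cdf1 (mdiagF F i) (Gbar F t) = cdf1 (F i) t := by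
  have : NeZero d := ⟨i.pos.ne'⟩
  have := isProbabilityMeasure_avgLaw F
  have hpre := (absolutelyContinuous_avgLaw F i).ae_eq (preimage_cdf1_Iic_ae_eq (avgLaw F) t)
  rw [cdf1_avgLaw] at hpre
  rw [cdf1, mdiagF, Measure.map_apply (measurable_Gbar F) measurableSet_Iic, measure_congr hpre,
    cdf1]

end AverageLaw

section SymmetrizingOperator

variable {F : Fin d → Measure ℝ} {μ : Measure (Fin d → ℝ)}

lemma IsCdfOS.ae_monotone (hμ : IsCdfOS F μ) : ∀ᵐ x ∂μ, Monotone x := by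
  have := hμ.1
  exact (prob_compl_eq_zero_iff isClosed_monotone.measurableSet).2 hμ.2.1

lemma IsCdfOS.marg_eq (hμ : IsCdfOS F μ) : marg μ = F := funext hμ.2.2

variable (F) in
/-- The law of `(G(X_1), …, G(X_d))` for `X ∼ μ`: it has marginals `mdiagF F` when `μ` has marginals
`F`, and it links the copula of `X` to that of `X_Π`, which is its symmetrization. -/
def gbarLaw (μ : Measure (Fin d → ℝ)) : Measure (Fin d → ℝ) := μ.map fun x i => Gbar F (x i)

variable [∀ i, IsProbabilityMeasure (F i)]

variable (F) in
lemma measurable_Gbar_apply : Measurable fun (x : Fin d → ℝ) i => Gbar F (x i) :=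
  measurable_pi_lambda _ fun i => (measurable_Gbar F).comp (measurable_pi_apply i)

lemma isProbabilityMeasure_gbarLaw [IsProbabilityMeasure μ] : IsProbabilityMeasure (gbarLaw F μ) :=
  Measure.isProbabilityMeasure_map (measurable_Gbar_apply F).aemeasurable

lemma ae_monotone_gbarLaw (hμ : ∀ᵐ x ∂μ, Monotone x) : ∀ᵐ u ∂gbarLaw F μ, Monotone u := by
  rw [gbarLaw, ae_map_iff (measurable_Gbar_apply F).aemeasurable isClosed_monotone.measurableSet]
  exact hμ.mono fun x hx => (monotone_Gbar F).comp hx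

lemma marg_gbarLaw (i : Fin d) : marg (gbarLaw F μ) i = (marg μ i).map (Gbar F) := by
  rw [marg, gbarLaw, Measure.map_map (measurable_pi_apply i) (measurable_Gbar_apply F), marg,
    Measure.map_map (measurable_Gbar F) (measurable_pi_apply i)]
  rfl

lemma map_gbarLaw_absolutelyContinuous_mdiagF (hμ : marg μ = F) (i : Fin d) :
    (gbarLaw F μ).map (Function.eval i) ≪ mdiagF F i := by
  have h := marg_gbarLaw (F := F) (μ := μ) i
  rw [hμ] at h
  exact h.absolutelyContinuous

variable [∀ i, NullSingletonClass (F i)]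

lemma copulaOf_eq_map_gbarLaw (hμ : marg μ = F) :
    copulaOf μ = (gbarLaw F μ).map (cdfMap (mdiagF F)) := by
  rw [gbarLaw, Measure.map_map (measurable_cdfMap _) (measurable_Gbar_apply F), copulaOf, hμ]
  congr 1
  funext x i
  exact (cdf1_mdiagF_Gbar F i (x i)).symm

lemma joinCopula_copulaOf (hμ : marg μ = F) : joinCopula F (copulaOf μ) = μ := by
  rw [copulaOf, hμ]
  exact map_qMap_map_cdfMap fun i => (congrFun hμ i).absolutelyContinuous

/-- All marginals of `X_Π` have cdf `G`. -/
lemma SF_copulaOf (hμ : marg μ = F) : SF F (copulaOf μ) = symmetrize (gbarLaw F μ) := by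
  rw [SF, joinCopula_copulaOf hμ, copulaOf]
  simp only [marg_symmetrize, hμ, cdf1_avgLaw]
  exact symmetrize_map_coordinatewise μ (measurable_Gbar F)

variable (F) in
lemma injOn_SF : InjOn (SF F) (copulaOS F) := by
  rintro _ ⟨μ, hμ, rfl⟩ _ ⟨μ', hμ', rfl⟩ hSF
  rw [SF_copulaOf hμ.marg_eq, SF_copulaOf hμ'.marg_eq] at hSF
  rw [copulaOf_eq_map_gbarLaw hμ.marg_eq, copulaOf_eq_map_gbarLaw hμ'.marg_eq,
    injOn_symmetrize (ae_monotone_gbarLaw hμ.ae_monotone) (ae_monotone_gbarLaw hμ'.ae_monotone) hSF]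

lemma SF_absolutelyContinuous_iff {C : Measure (Fin d → ℝ)} (hC : C ∈ copulaOS F) :
    SF F C ≪ volume ↔ C ≪ volume := by
  obtain ⟨μ, hμ, rfl⟩ := hC
  have := hμ.1
  have := isProbabilityMeasure_gbarLaw (F := F) (μ := μ)
  rw [SF_copulaOf hμ.marg_eq, copulaOf_eq_map_gbarLaw hμ.marg_eq,
    symmetrize_absolutelyContinuous_iff, map_cdfMap_absolutelyContinuous_iff
      (map_gbarLaw_absolutelyContinuous_mdiagF hμ.marg_eq) (mdiagF_absolutelyContinuous F)]

lemma rnDeriv_SF {C : Measure (Fin d → ℝ)} (hC : C ∈ copulaOS F) (hac : C ≪ volume) :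
    (SF F C).rnDeriv volume =ᵐ[volume] fun u => (d.factorial : ℝ≥0∞)⁻¹ *
      ((∏ i, ENNReal.ofReal (deriv (cdf1 (mdiagF F i)) (orderStat u i))) *
        C.rnDeriv volume (cdfMap (mdiagF F) (orderStat u))) := by
  obtain ⟨μ, hμ, rfl⟩ := hC
  have := hμ.1
  have := isProbabilityMeasure_gbarLaw (F := F) (μ := μ)
  have hcop := copulaOf_eq_map_gbarLaw hμ.marg_eq
  have hprod : Measurable fun u : Fin d → ℝ =>
      ∏ i, ENNReal.ofReal (deriv (cdf1 (mdiagF F i)) (u i)) :=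
    measurable_prod_apply (fun i => (measurable_deriv (cdf1 (mdiagF F i))).ennreal_ofReal) _
  have hdens : Measurable ((copulaOf μ).rnDeriv volume ∘ cdfMap (mdiagF F)) :=
    (Measure.measurable_rnDeriv _ _).comp (measurable_cdfMap _)
  have hν : gbarLaw F μ = volume.withDensity ((fun u =>
      ∏ i, ENNReal.ofReal (deriv (cdf1 (mdiagF F i)) (u i))) *
        (copulaOf μ).rnDeriv volume ∘ cdfMap (mdiagF F)) := by
    rw [withDensity_mul _ hprod hdens,
      ← pi_eq_withDensity_deriv_cdf1 (mdiagF_absolutelyContinuous F), hcop]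
    exact eq_pi_withDensity_rnDeriv (map_gbarLaw_absolutelyContinuous_mdiagF hμ.marg_eq)
      (hcop ▸ hac)
  have hmono := ae_monotone_gbarLaw (F := F) hμ.ae_monotone
  rw [hν] at hmono
  rw [SF_copulaOf hμ.marg_eq, hν]
  exact rnDeriv_symmetrize_withDensity (hprod.mul hdens) hmono

end SymmetrizingOperator

theorem stmt_15_general {d : ℕ} (F : Fin d → Measure ℝ) [∀ i, IsProbabilityMeasure (F i)]
    [∀ i, NullSingletonClass (F i)] :
    Set.InjOn (SF F) (copulaOS F ∩ {C | C ≪ (volume : Measure (Fin d → ℝ))}) ∧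
    SF F '' (copulaOS F ∩ {C | C ≪ (volume : Measure (Fin d → ℝ))})
      = (SF F '' copulaOS F) ∩ {C | C ≪ (volume : Measure (Fin d → ℝ))} ∧
    ∀ C ∈ copulaOS F, C ≪ (volume : Measure (Fin d → ℝ)) →
      ∀ᵐ u ∂(volume : Measure (Fin d → ℝ)),
        ((SF F C).rnDeriv volume u).toReal =
          (d.factorial : ℝ)⁻¹ *
            (C.rnDeriv volume (fun i => cdf1 (mdiagF F i) (orderStat u i))).toReal *
            ∏ i : Fin d, deriv (cdf1 (mdiagF F i)) (orderStat u i) := by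
  refine ⟨(injOn_SF F).mono inter_subset_left, ?_, fun C hC hac => ?_⟩
  · rw [← image_inter_preimage]
    congr 1
    ext C
    exact and_congr_right fun hC => (SF_absolutelyContinuous_iff hC).symm
  · filter_upwards [rnDeriv_SF hC hac] with u hu
    rw [hu, ENNReal.toReal_mul, ENNReal.toReal_mul, ENNReal.toReal_inv, ENNReal.toReal_natCast,
      ENNReal.toReal_prod, mul_comm (∏ i, _), mul_assoc]
    simp only [ENNReal.toReal_ofReal (monotone_cdf1 _).deriv_nonneg]
    rfl

/-- Lemma `lem:dens_c_ctilde`.  Let `F = (F_1, …, F_d) ∈ F_d^0`.  The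
symmetrizing operator `S_F` is a bijection from `C^OS(F) ∩ C^0` onto `C^sym(F) ∩ C^0`;
moreover, if `C ∈ C^OS(F) ∩ C^0` has density `c`, then the density of `S_F(C)` at almost
every `u` is `(1/d!) c(δ_(1)(u_(1)), …, δ_(d)(u_(d))) ∏_{i=1}^d δ'_{(i)}(u_(i))`, where
`δ^F = (F_i ∘ G^{-1}, 1 ≤ i ≤ d)` and `G = (1/d) ∑ F_i`. -/
theorem stmt_15 {d : ℕ} [NeZero d] (F : Fin d → Measure ℝ) (hF : IsMargOS0 F) :
    Set.InjOn (SF F) (copulaOS F ∩ {C | C ≪ (volume : Measure (Fin d → ℝ))}) ∧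
    SF F '' (copulaOS F ∩ {C | C ≪ (volume : Measure (Fin d → ℝ))})
      = (SF F '' copulaOS F) ∩ {C | C ≪ (volume : Measure (Fin d → ℝ))} ∧
    ∀ C ∈ copulaOS F, C ≪ (volume : Measure (Fin d → ℝ)) →
      ∀ᵐ u ∂(volume : Measure (Fin d → ℝ)),
        ((SF F C).rnDeriv volume u).toReal =
          (d.factorial : ℝ)⁻¹ *
            (C.rnDeriv volume (fun i => cdf1 (mdiagF F i) (orderStat u i))).toReal *
            ∏ i : Fin d, deriv (cdf1 (mdiagF F i)) (orderStat u i) := by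
  have := hF.1.prob
  have (i : Fin d) : NullSingletonClass (F i) := ⟨hF.1.cont i⟩
  exact stmt_15_general F

end MaxEntOS
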